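/- Let F be a field of characteristic different from 2, let Φ ∈ M_n(F) be symmetric and invertible, and let σ be the involution on M_n(F) given by σ(X) = ΦXᵀΦ⁻¹. Assume that at every field ordering P of F the matrix Φ is positive definite or negative definite at P. Then for every U ∈ M_n(F) with σ(U) = U, the following are equivalent: (i) tr(σ(X)UX) ≥_P 0 for every X ∈ M_n(F) and every field ordering P of F; (ii) there exist finitely many matrices X_1, ..., X_N ∈ M_n(F) such that U = Σ_{i=1}^{N} σ(X_i)X_i. -/

import Mathlib

open Matrix BigOperators

/-- A field ordering of `F`, given by its cone of nonnegative elements.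
This is equivalent to a linear order making `F` a linearly ordered field. -/
structure FieldOrdering (F : Type*) [Field F] where
  nonneg : F → Prop
  add_nonneg : ∀ {x y : F}, nonneg x → nonneg y → nonneg (x + y)
  mul_nonneg : ∀ {x y : F}, nonneg x → nonneg y → nonneg (x * y)
  total : ∀ x : F, nonneg x ∨ nonneg (-x)
  eq_zero_of : ∀ {x : F}, nonneg x → nonneg (-x) → x = 0

/-- `x >_P 0`. -/
def FieldOrdering.pos {F : Type*} [Field F] (P : FieldOrdering F) (x : F) : Prop :=
  P.nonneg x ∧ x ≠ 0

/-- A matrix is positive semidefinite at an ordering `P` if `xᵀMx ≥_P 0` for all `x`. -/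
def Matrix.IsPSDAt {F : Type*} [Field F] {n : ℕ} (P : FieldOrdering F)
    (M : Matrix (Fin n) (Fin n) F) : Prop :=
  ∀ x : Fin n → F, P.nonneg (x ⬝ᵥ (M *ᵥ x))

/-- A matrix is positive definite at an ordering `P` if `xᵀMx >_P 0` for all `x ≠ 0`. -/
def Matrix.IsPDAt {F : Type*} [Field F] {n : ℕ} (P : FieldOrdering F)
    (M : Matrix (Fin n) (Fin n) F) : Prop :=
  ∀ x : Fin n → F, x ≠ 0 → P.pos (x ⬝ᵥ (M *ᵥ x))

/-- Adjoin an element to a subsemiring containing all squares. -/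
def adjoinElt {F : Type*} [Field F] (S : Subsemiring F) (hS : ∀ x : F, x * x ∈ S) (x : F) :
    Subsemiring F where
  carrier := {z | ∃ s ∈ S, ∃ t ∈ S, z = s + x * t}
  mul_mem' := by
    rintro _ _ ⟨s, hs, t, ht, rfl⟩ ⟨s', hs', t', ht', rfl⟩
    exact ⟨s * s' + x * x * (t * t'), S.add_mem (S.mul_mem hs hs')
      (S.mul_mem (hS x) (S.mul_mem ht ht')), s * t' + t * s',
      S.add_mem (S.mul_mem hs ht') (S.mul_mem ht hs'), by ring⟩
  one_mem' := ⟨1, S.one_mem, 0, S.zero_mem, by ring⟩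
  add_mem' := by
    rintro _ _ ⟨s, hs, t, ht, rfl⟩ ⟨s', hs', t', ht', rfl⟩
    exact ⟨s + s', S.add_mem hs hs', t + t', S.add_mem ht ht', by ring⟩
  zero_mem' := ⟨0, S.zero_mem, 0, S.zero_mem, by ring⟩

theorem le_adjoinElt {F : Type*} [Field F] (S : Subsemiring F) (hS : ∀ x : F, x * x ∈ S) (x : F) :
    S ≤ adjoinElt S hS x := fun s hs => ⟨s, hs, 0, S.zero_mem, by ring⟩

theorem mem_adjoinElt {F : Type*} [Field F] (S : Subsemiring F) (hS : ∀ x : F, x * x ∈ S) (x : F) :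
    x ∈ adjoinElt S hS x := ⟨0, S.zero_mem, 1, S.one_mem, by ring⟩

theorem neg_one_adjoinElt {F : Type*} [Field F] (S : Subsemiring F) (hS : ∀ x : F, x * x ∈ S)
    (h1 : (-1 : F) ∉ S) (x : F) (hx : -x ∉ S) : (-1 : F) ∉ adjoinElt S hS x := by
  rintro ⟨s, hs, t, ht, h⟩
  by_cases h0 : t = 0
  · subst h0
    apply h1
    rw [h]
    simpa using hs
  · apply hx
    have : -x = (1 + s) * t * (t⁻¹ * t⁻¹) := by
      field_simp
      linear_combination h
    rw [this]
    exact S.mul_mem (S.mul_mem (S.add_mem S.one_mem hs) ht) (hS _)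

theorem exists_ordering {F : Type*} [Field F] (S₀ : Subsemiring F) (hS₀ : ∀ x : F, x * x ∈ S₀)
    (h1 : (-1 : F) ∉ S₀) : ∃ P : FieldOrdering F, ∀ x ∈ S₀, P.nonneg x := by
  obtain ⟨S, hle, hmax⟩ := zorn_le_nonempty₀ {S : Subsemiring F | S₀ ≤ S ∧ (-1 : F) ∉ S} (by
    intro c hc hchain y hy
    refine ⟨sSup c, ⟨(hc hy).1.trans (le_sSup hy), ?_⟩, fun z hz => le_sSup hz⟩
    rw [Subsemiring.mem_sSup_of_directedOn ⟨y, hy⟩ hchain.directedOn]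
    rintro ⟨s, hs, h⟩
    exact (hc hs).2 h) S₀ ⟨le_rfl, h1⟩
  have hsq : ∀ x : F, x * x ∈ S := fun x => hle (hS₀ x)
  have hm1 : (-1 : F) ∉ S := hmax.prop.2
  refine ⟨⟨fun x => x ∈ S, S.add_mem, S.mul_mem, ?_, ?_⟩, fun x hx => hle hx⟩
  · intro x
    by_contra! h
    apply h.1
    have := hmax.le_of_ge (y := adjoinElt S hsq x)
      ⟨hle.trans (le_adjoinElt S hsq x), neg_one_adjoinElt S hsq hm1 x h.2⟩ (le_adjoinElt S hsq x)
    exact this (mem_adjoinElt S hsq x)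
  · intro x hx hnx
    by_contra h0
    apply hm1
    have : (-1 : F) = x * (-x) * (x⁻¹ * x⁻¹) := by field_simp
    rw [this]
    exact S.mul_mem (S.mul_mem hx hnx) (hsq _)

/-- Artin: totally nonnegative elements are sums of squares. -/
theorem artin_sumSq {F : Type*} [Field F] (hF : (2 : F) ≠ 0) (a : F)
    (ha : ∀ P : FieldOrdering F, P.nonneg a) : IsSumSq a := by
  by_contra hn
  have hsq : ∀ x : F, x * x ∈ Subsemiring.sumSq F := fun x => by simp
  have h1 : (-1 : F) ∉ Subsemiring.sumSq F := by
    intro h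
    apply hn
    have : a = ((a + 1) / 2) * ((a + 1) / 2) + (-1) * (((a - 1) / 2) * ((a - 1) / 2)) := by
      field_simp
      ring
    rw [← Subsemiring.mem_sumSq, this]
    exact add_mem (hsq _) (mul_mem h (hsq _))
  obtain ⟨P, hP⟩ := exists_ordering (adjoinElt _ hsq (-a))
    (fun x => le_adjoinElt _ _ _ (hsq x))
    (neg_one_adjoinElt _ hsq h1 _ (by simpa using hn))
  have h := P.eq_zero_of (ha P) (hP _ (mem_adjoinElt _ _ _))
  subst h
  exact hn IsSumSq.zero

/-- Diagonalization of symmetric matrices. -/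
theorem exists_diag {F : Type*} [Field F] (hF : (2 : F) ≠ 0) {n : ℕ}
    (M : Matrix (Fin n) (Fin n) F) (hM : Mᵀ = M) :
    ∃ y e : Fin n → Fin n → F, M = ∑ j, (y j ⬝ᵥ (M *ᵥ y j)) • vecMulVec (e j) (e j) := by
  haveI : Invertible (2 : F) := invertibleOfNonzero hF
  have hsymm : LinearMap.IsSymm (Matrix.toBilin' M) := by
    constructor
    intro x y
    simp only [Matrix.toBilin'_apply', RingHom.id_apply]
    conv_lhs => rw [← hM]
    rw [Matrix.mulVec_transpose, dotProduct_comm, dotProduct_mulVec]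
  obtain ⟨v', hv'⟩ := LinearMap.BilinForm.exists_orthogonal_basis hsymm
  have hfr : Module.finrank F (Fin n → F) = n := by simp
  let v := v'.reindex (finCongr hfr)
  have hv : ∀ i j, i ≠ j → v i ⬝ᵥ (M *ᵥ v j) = 0 := by
    intro i j hij
    have := hv' (i := (finCongr hfr).symm i) (j := (finCongr hfr).symm j) (by simpa using hij)
    simpa [Function.onFun, LinearMap.IsOrtho, Matrix.toBilin'_apply', v] using this
  -- columns of Q are the v j
  let Q : Matrix (Fin n) (Fin n) F := Matrix.of (fun i j => v j i)
  let R : Matrix (Fin n) (Fin n) F := Matrix.of (fun j i => v.repr (Pi.single i 1) j)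
  have hQR : Q * R = 1 := by
    ext i k
    have := congrFun (v.sum_repr (Pi.single k 1)) i
    simp only [Finset.sum_apply, Pi.smul_apply, smul_eq_mul] at this
    simp only [Q, R, Matrix.mul_apply, Matrix.of_apply, Matrix.one_apply]
    rw [Finset.sum_congr rfl (fun x _ => mul_comm _ _), this, Pi.single_apply]
  have hD : Qᵀ * M * Q = Matrix.diagonal (fun j => v j ⬝ᵥ (M *ᵥ v j)) := by
    ext i j
    have : (Qᵀ * M * Q) i j = v i ⬝ᵥ (M *ᵥ v j) := by
      rw [Matrix.mul_assoc]
      simp [Matrix.mul_apply, dotProduct, Matrix.mulVec, Q]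
    rw [this, Matrix.diagonal_apply]
    split_ifs with h
    · rw [h]
    · exact hv i j h
  have hM' : M = Rᵀ * (Qᵀ * M * Q) * R := by
    have h2 : Rᵀ * Qᵀ = 1 := by rw [← Matrix.transpose_mul, hQR, Matrix.transpose_one]
    calc M = (Rᵀ * Qᵀ) * M * (Q * R) := by rw [h2, hQR]; simp
      _ = _ := by simp only [Matrix.mul_assoc]
  refine ⟨fun j => v j, fun j => R j, ?_⟩
  conv_lhs => rw [hM', hD]
  ext i k
  rw [Matrix.mul_apply]
  simp only [Matrix.mul_diagonal, Matrix.sum_apply, Matrix.smul_apply,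
    Matrix.vecMulVec_apply, Matrix.transpose_apply, smul_eq_mul]
  exact Finset.sum_congr rfl (fun x _ => by ring)

theorem FieldOrdering.zero_nonneg {F : Type*} [Field F] (P : FieldOrdering F) : P.nonneg 0 := by
  rcases P.total 0 with h | h
  · exact h
  · simpa using h

theorem FieldOrdering.sum_nonneg {F : Type*} [Field F] (P : FieldOrdering F) {ι : Type*}
    (s : Finset ι) (f : ι → F) (h : ∀ i ∈ s, P.nonneg (f i)) : P.nonneg (∑ i ∈ s, f i) :=
  Finset.sum_induction f P.nonneg (fun _ _ => P.add_nonneg) P.zero_nonneg h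

theorem psd_of_pd {F : Type*} [Field F] {n : ℕ} (P : FieldOrdering F)
    (M : Matrix (Fin n) (Fin n) F) (h : M.IsPDAt P) : M.IsPSDAt P := by
  intro x
  by_cases hx : x = 0
  · subst hx
    simpa using P.zero_nonneg
  · exact (h x hx).1

theorem trace_vecMulVec_mul {F : Type*} [Field F] {n : ℕ} (e : Fin n → F)
    (A : Matrix (Fin n) (Fin n) F) : (vecMulVec e e * A).trace = e ⬝ᵥ (A *ᵥ e) := by
  simp only [Matrix.trace, Matrix.diag, Matrix.mul_apply, Matrix.vecMulVec_apply, dotProduct,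
    Matrix.mulVec, Finset.mul_sum]
  rw [Finset.sum_comm]
  exact Finset.sum_congr rfl fun i _ => Finset.sum_congr rfl fun j _ => by ring

theorem quad_congr {F : Type*} [Field F] {n : ℕ} (Z A : Matrix (Fin n) (Fin n) F)
    (e : Fin n → F) : e ⬝ᵥ ((Zᵀ * A * Z) *ᵥ e) = (Z *ᵥ e) ⬝ᵥ (A *ᵥ (Z *ᵥ e)) := by
  rw [← Matrix.mulVec_mulVec, ← Matrix.mulVec_mulVec, dotProduct_mulVec, Matrix.vecMul_transpose]

theorem square_nonneg_at {F : Type*} [Field F] (hF : (2 : F) ≠ 0) {n : ℕ}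
    (Φ : Matrix (Fin n) (Fin n) F) (hΦsym : Φᵀ = Φ) (hΦ : IsUnit Φ.det)
    (P : FieldOrdering F) (hP : Φ.IsPDAt P ∨ (-Φ).IsPDAt P) (Z : Matrix (Fin n) (Fin n) F) :
    P.nonneg (Φ * Zᵀ * Φ⁻¹ * Z).trace := by
  have hprod : ∀ x y : Fin n → F, P.nonneg ((x ⬝ᵥ (Φ *ᵥ x)) * (y ⬝ᵥ (Φ *ᵥ y))) := by
    intro x y
    rcases hP with h | h
    · exact P.mul_nonneg (psd_of_pd P _ h x) (psd_of_pd P _ h y)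
    · have := P.mul_nonneg (psd_of_pd P _ h x) (psd_of_pd P _ h y)
      simpa [Matrix.neg_mulVec] using this
  have hinv : Φ⁻¹ = (Φ⁻¹)ᵀ * Φ * Φ⁻¹ := by
    rw [Matrix.transpose_nonsing_inv, hΦsym, Matrix.nonsing_inv_mul _ hΦ, Matrix.one_mul]
  obtain ⟨y, e, hye⟩ := exists_diag hF Φ hΦsym
  have key : (Φ * (Zᵀ * Φ⁻¹ * Z)).trace =
      ∑ j, (y j ⬝ᵥ (Φ *ᵥ y j)) * (e j ⬝ᵥ ((Zᵀ * Φ⁻¹ * Z) *ᵥ e j)) := by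
    generalize Zᵀ * Φ⁻¹ * Z = A
    conv_lhs => rw [hye]
    rw [Finset.sum_mul, Matrix.trace_sum]
    refine Finset.sum_congr rfl fun j _ => ?_
    rw [Matrix.smul_mul, Matrix.trace_smul, trace_vecMulVec_mul, smul_eq_mul]
  have h2 : Φ * Zᵀ * Φ⁻¹ * Z = Φ * (Zᵀ * Φ⁻¹ * Z) := by simp only [Matrix.mul_assoc]
  rw [h2, key]
  refine P.sum_nonneg _ _ fun j _ => ?_
  rw [quad_congr]
  generalize Z *ᵥ e j = w
  rw [hinv, quad_congr]
  exact hprod _ _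

theorem exists_anisotropic {F : Type*} [Field F] (hF : (2 : F) ≠ 0) {n : ℕ} (hn : 0 < n)
    (Φ : Matrix (Fin n) (Fin n) F) (hΦsym : Φᵀ = Φ) (hΦ : IsUnit Φ.det) :
    ∃ v : Fin n → F, v ⬝ᵥ (Φ *ᵥ v) ≠ 0 := by
  by_contra! h
  obtain ⟨y, e, hye⟩ := exists_diag hF Φ hΦsym
  haveI : Nonempty (Fin n) := ⟨⟨0, hn⟩⟩
  have : Φ = 0 := by rw [hye]; simp [h]
  rw [this, Matrix.det_zero] at hΦ
  exact not_isUnit_zero hΦ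

theorem rank_one_id {F : Type*} [Field F] {n : ℕ} (Φ M : Matrix (Fin n) (Fin n) F)
    (y v : Fin n → F) :
    (Φ * (vecMulVec y v)ᵀ * M * vecMulVec y v).trace = (v ⬝ᵥ (Φ *ᵥ v)) * (y ⬝ᵥ (M *ᵥ y)) := by
  have h1 : Φ * (vecMulVec y v)ᵀ * M = vecMulVec (Φ *ᵥ v) (y ᵥ* M) := by
    rw [Matrix.transpose_vecMulVec, Matrix.mul_vecMulVec, Matrix.vecMulVec_mul]
  rw [h1, Matrix.vecMulVec_mul_vecMulVec, Matrix.trace_vecMulVec, dotProduct_smul, smul_eq_mul,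
    dotProduct_mulVec y M y, dotProduct_comm (Φ *ᵥ v), mul_comm]

theorem mem_closure_exists {F : Type*} [Field F] {n : ℕ} (Φ : Matrix (Fin n) (Fin n) F)
    (U : Matrix (Fin n) (Fin n) F)
    (hU : U ∈ AddSubmonoid.closure
      (Set.range fun X : Matrix (Fin n) (Fin n) F => Φ * Xᵀ * Φ⁻¹ * X)) :
    ∃ (N : ℕ) (X : Fin N → Matrix (Fin n) (Fin n) F),
        U = ∑ i, (Φ * (X i)ᵀ * Φ⁻¹) * X i := by
  induction hU using AddSubmonoid.closure_induction_left with
  | zero => exact ⟨0, Fin.elim0, by simp⟩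
  | add_left x hx y hy ih =>
    obtain ⟨Z, rfl⟩ := hx
    obtain ⟨N, X, rfl⟩ := ih
    exact ⟨N + 1, Fin.cons Z X, by simp [Fin.sum_univ_succ]⟩

theorem scaled_mem {F : Type*} [Field F] {n : ℕ} (Φ : Matrix (Fin n) (Fin n) F)
    (hΦsym : Φᵀ = Φ) (hΦ : IsUnit Φ.det) (v e : Fin n → F) (s : F) (hs : IsSumSq s) :
    Φ * ((s * (v ⬝ᵥ (Φ *ᵥ v))) • vecMulVec e e) ∈ AddSubmonoid.closure
      (Set.range fun X : Matrix (Fin n) (Fin n) F => Φ * Xᵀ * Φ⁻¹ * X) := by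
  induction hs with
  | zero => simp
  | sq_add a hs ih =>
    rw [add_mul, add_smul, Matrix.mul_add]
    refine add_mem (AddSubmonoid.subset_closure ⟨a • vecMulVec (Φ *ᵥ v) e, ?_⟩) ih
    have h1 : Φ⁻¹ *ᵥ (Φ *ᵥ v) = v := by
      rw [Matrix.mulVec_mulVec, Matrix.nonsing_inv_mul _ hΦ, Matrix.one_mulVec]
    have h2 : (vecMulVec (Φ *ᵥ v) e)ᵀ * (Φ⁻¹ * vecMulVec (Φ *ᵥ v) e) =
        (v ⬝ᵥ (Φ *ᵥ v)) • vecMulVec e e := by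
      rw [Matrix.mul_vecMulVec, h1, Matrix.transpose_vecMulVec, Matrix.vecMulVec_mul_vecMulVec,
        Matrix.vecMulVec_smul, dotProduct_comm]
    simp only [Matrix.transpose_smul, Matrix.mul_smul, Matrix.smul_mul, Matrix.mul_assoc, h2,
      smul_smul, mul_assoc]

theorem stmt_12 {F : Type*} [Field F] (hF : (2 : F) ≠ 0) {n : ℕ}
    (Φ : Matrix (Fin n) (Fin n) F) (hΦsym : Φᵀ = Φ) (hΦ : IsUnit Φ.det)
    (hΦdef : ∀ P : FieldOrdering F, Φ.IsPDAt P ∨ (-Φ).IsPDAt P)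
    (U : Matrix (Fin n) (Fin n) F) (hUσ : Φ * Uᵀ * Φ⁻¹ = U) :
    (∀ (P : FieldOrdering F) (X : Matrix (Fin n) (Fin n) F),
        P.nonneg ((Φ * Xᵀ * Φ⁻¹) * U * X).trace) ↔
      ∃ (N : ℕ) (X : Fin N → Matrix (Fin n) (Fin n) F),
        U = ∑ i, (Φ * (X i)ᵀ * Φ⁻¹) * X i := by
  constructor
  · intro h
    apply mem_closure_exists
    rcases Nat.eq_zero_or_pos n with hn | hn
    · subst hn
      rw [Subsingleton.elim U 0]
      exact zero_mem _
    obtain ⟨v, hv⟩ := exists_anisotropic hF hn Φ hΦsym hΦ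
    have hU : U = Φ * (Φ⁻¹ * U) := by
      rw [← Matrix.mul_assoc, Matrix.mul_nonsing_inv _ hΦ, Matrix.one_mul]
    have hMsym : (Φ⁻¹ * U)ᵀ = Φ⁻¹ * U := by
      conv_rhs => rw [← hUσ]
      rw [Matrix.transpose_mul, Matrix.transpose_nonsing_inv, hΦsym, Matrix.mul_assoc Φ,
        ← Matrix.mul_assoc, Matrix.nonsing_inv_mul _ hΦ, Matrix.one_mul]
    have hpos : ∀ y : Fin n → F, IsSumSq ((v ⬝ᵥ (Φ *ᵥ v)) * (y ⬝ᵥ ((Φ⁻¹ * U) *ᵥ y))) := by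
      intro y
      refine artin_sumSq hF _ fun P => ?_
      rw [← rank_one_id]
      simpa only [Matrix.mul_assoc] using h P (vecMulVec y v)
    obtain ⟨y, e, hye⟩ := exists_diag hF _ hMsym
    rw [hU, hye, Matrix.mul_sum]
    refine sum_mem fun j _ => ?_
    have := scaled_mem Φ hΦsym hΦ v (e j) _
      ((hpos (y j)).mul (IsSumSq.mul_self (v ⬝ᵥ (Φ *ᵥ v))⁻¹))
    convert this using 3
    field_simp
  · rintro ⟨N, X, hU⟩ P Y
    have : Φ * Yᵀ * Φ⁻¹ * U * Y = ∑ i, Φ * (X i * Y)ᵀ * Φ⁻¹ * (X i * Y) := by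
      rw [hU, Matrix.mul_sum, Matrix.sum_mul]
      refine Finset.sum_congr rfl fun i _ => ?_
      rw [Matrix.transpose_mul]
      simp only [Matrix.mul_assoc]
      rw [← Matrix.mul_assoc Φ⁻¹ Φ, Matrix.nonsing_inv_mul _ hΦ, Matrix.one_mul]
    rw [this, Matrix.trace_sum]
    exact P.sum_nonneg _ _ fun i _ => square_nonneg_at hF Φ hΦsym hΦ P (hΦdef P) _
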